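/- Let n ≥ 2. For each unordered pair {i,j} with 1 ≤ i < j ≤ n, the subgroup ⟨λ_{i,j}, λ_{j,i}⟩ of UVP_n is a free group of rank 2 freely generated by λ_{i,j} and λ_{j,i}; these n(n−1)/2 subgroups pairwise commute elementwise; and UVP_n is their internal direct product. Consequently UVP_n is isomorphic to the direct product, over all unordered pairs {i,j} ⊆ {1,…,n}, of free groups of rank 2. -/

import Mathlib

/-!  Common setup: the unrestricted virtual braid group `UVB n`, its generators
σ_k, ρ_k (1-based indices), the elements λ_{i,j} and B_{i,j}, the permutation
homomorphism ι (characterized by `IsIota`), the section s : S_n → UVB n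
(characterized by `IsPermSection`), and fused Markov equivalence. -/

/-- Generators of the unrestricted virtual braid group `UVB n`:
`Sum.inl i` is the classical generator σ_{i+1} and `Sum.inr i` is the virtual
generator ρ_{i+1}, for `i : Fin (n-1)` (so the 1-based indices are `1, …, n-1`). -/
abbrev UVBGen (n : ℕ) := Sum (Fin (n - 1)) (Fin (n - 1))

namespace UVBGen
def sg {n : ℕ} (i : Fin (n - 1)) : FreeGroup (UVBGen n) := FreeGroup.of (Sum.inl i)
def rg {n : ℕ} (i : Fin (n - 1)) : FreeGroup (UVBGen n) := FreeGroup.of (Sum.inr i)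
end UVBGen

open UVBGen in
/-- The defining relations of the unrestricted virtual braid group. -/
def uvbRels (n : ℕ) : Set (FreeGroup (UVBGen n)) :=
  {r | (∃ i j : Fin (n - 1), (j : ℕ) = (i : ℕ) + 1 ∧
          (r = sg i * sg j * sg i * (sg j * sg i * sg j)⁻¹ ∨
           r = rg i * rg j * rg i * (rg j * rg i * rg j)⁻¹ ∨
           r = rg i * rg j * sg i * (sg j * rg i * rg j)⁻¹ ∨
           r = rg i * sg j * sg i * (sg j * sg i * rg j)⁻¹ ∨
           r = rg j * sg i * sg j * (sg i * sg j * rg i)⁻¹)) ∨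
       (∃ i j : Fin (n - 1), ((i : ℕ) + 2 ≤ (j : ℕ) ∨ (j : ℕ) + 2 ≤ (i : ℕ)) ∧
          (r = sg i * sg j * (sg j * sg i)⁻¹ ∨
           r = rg i * rg j * (rg j * rg i)⁻¹ ∨
           r = sg i * rg j * (rg j * sg i)⁻¹)) ∨
       (∃ i : Fin (n - 1), r = rg i * rg i)}

/-- The unrestricted virtual braid group on `n` strands. -/
abbrev UVB (n : ℕ) := PresentedGroup (uvbRels n)

namespace UVB

/-- The generator σ_k (1-based index; meaningful for `1 ≤ k ≤ n-1`, junk value `1` otherwise). -/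
def sigma (n k : ℕ) : UVB n :=
  if h : 1 ≤ k ∧ k ≤ n - 1 then PresentedGroup.of (Sum.inl ⟨k - 1, by omega⟩) else 1

/-- The generator ρ_k (1-based index; meaningful for `1 ≤ k ≤ n-1`, junk value `1` otherwise). -/
def rho (n k : ℕ) : UVB n :=
  if h : 1 ≤ k ∧ k ≤ n - 1 then PresentedGroup.of (Sum.inr ⟨k - 1, by omega⟩) else 1

/-- The element λ_{i,j} of `UVB n` (1-based indices `1 ≤ i ≠ j ≤ n`; junk value `1` if `i = j`).
For `i < j`:  `λ_{i,j} = ρ_{j-1}⋯ρ_{i+1} · ρ_i σ_i⁻¹ · ρ_{i+1}⋯ρ_{j-1}` and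
`λ_{j,i} = ρ_{j-1}⋯ρ_{i+1} · σ_i⁻¹ ρ_i · ρ_{i+1}⋯ρ_{j-1}`. -/
def lam (n i j : ℕ) : UVB n :=
  if i < j then
    (((List.range' (i + 1) (j - 1 - i)).reverse.map (rho n)).prod) *
      (rho n i * (sigma n i)⁻¹) *
      (((List.range' (i + 1) (j - 1 - i)).map (rho n)).prod)
  else if j < i then
    (((List.range' (j + 1) (i - 1 - j)).reverse.map (rho n)).prod) *
      ((sigma n j)⁻¹ * rho n j) *
      (((List.range' (j + 1) (i - 1 - j)).map (rho n)).prod)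
  else 1

/-- The element `B_{i,j} = ρ_{j-1}ρ_{j-2}⋯ρ_{i+1}ρ_i` for `i < j`, and `1` otherwise. -/
def B (n i j : ℕ) : UVB n :=
  if i < j then ((List.range' i (j - i)).reverse.map (rho n)).prod else 1

/-- The subgroup `U_j` of `UVB n` generated by `{λ_{i,j}, λ_{j,i} : 1 ≤ i < j}`. -/
def U (n j : ℕ) : Subgroup (UVB n) :=
  Subgroup.closure {x | ∃ i, 1 ≤ i ∧ i < j ∧ (x = lam n i j ∨ x = lam n j i)}

end UVB

/-- `ι : UVB n →* S_n` is the homomorphism sending σ_k and ρ_k to the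
transposition (k, k+1) (written 0-based on `Fin n`). -/
def IsIota (n : ℕ) (ι : UVB n →* Equiv.Perm (Fin n)) : Prop :=
  ∀ (k : ℕ) (h1 : 1 ≤ k) (h2 : k ≤ n - 1),
    ι (UVB.sigma n k) = Equiv.swap ⟨k - 1, by omega⟩ ⟨k, by omega⟩ ∧
    ι (UVB.rho n k) = Equiv.swap ⟨k - 1, by omega⟩ ⟨k, by omega⟩

/-- `s : S_n →* UVB n` is the homomorphism sending the transposition (k, k+1) to ρ_k. -/
def IsPermSection (n : ℕ) (s : Equiv.Perm (Fin n) →* UVB n) : Prop :=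
  ∀ (k : ℕ) (h1 : 1 ≤ k) (h2 : k ≤ n - 1),
    s (Equiv.swap ⟨k - 1, by omega⟩ ⟨k, by omega⟩) = UVB.rho n k

/-- The number of orbits of a permutation of `Fin n`
(= number of fixed points + number of nontrivial cycles). -/
def numOrbits {n : ℕ} (π : Equiv.Perm (Fin n)) : ℕ :=
  (Finset.univ.filter fun x => π x = x).card + π.cycleType.card

namespace UVB

private def embedGen (n : ℕ) : UVBGen n → UVBGen (n + 1)
  | Sum.inl i => Sum.inl ⟨i.val, by have := i.isLt; omega⟩
  | Sum.inr i => Sum.inr ⟨i.val, by have := i.isLt; omega⟩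

open UVBGen in
/-- The natural inclusion `UVB n →* UVB (n+1)` (σ_k ↦ σ_k, ρ_k ↦ ρ_k). -/
def incl (n : ℕ) : UVB n →* UVB (n + 1) :=
  PresentedGroup.toGroup (f := fun x => PresentedGroup.of (embedGen n x)) (by
    have key : (FreeGroup.lift fun x => (PresentedGroup.of (embedGen n x) : UVB (n + 1)))
        = (PresentedGroup.mk (uvbRels (n + 1))).comp (FreeGroup.map (embedGen n)) := by
      ext x
      simp [PresentedGroup.of]
    intro r hr
    rw [key]
    simp only [MonoidHom.comp_apply]
    have hmem : FreeGroup.map (embedGen n) r ∈ uvbRels (n + 1) := by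
      have hsg : ∀ i : Fin (n - 1), FreeGroup.map (embedGen n) (sg i)
          = sg (⟨i.val, by have := i.isLt; omega⟩ : Fin (n + 1 - 1)) := by
        intro i; simp [sg, embedGen]
      have hrg : ∀ i : Fin (n - 1), FreeGroup.map (embedGen n) (rg i)
          = rg (⟨i.val, by have := i.isLt; omega⟩ : Fin (n + 1 - 1)) := by
        intro i; simp [rg, embedGen]
      rcases hr with ⟨i, j, hij, hc⟩ | ⟨i, j, hij, hc⟩ | ⟨i, hc⟩
      · refine Or.inl ⟨⟨i.val, by have := i.isLt; omega⟩, ⟨j.val, by have := j.isLt; omega⟩,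
          by simpa using hij, ?_⟩
        rcases hc with h | h | h | h | h <;> subst h <;>
          simp only [map_mul, map_inv, hsg, hrg] <;> tauto
      · refine Or.inr (Or.inl ⟨⟨i.val, by have := i.isLt; omega⟩, ⟨j.val, by have := j.isLt; omega⟩,
          by simpa using hij, ?_⟩)
        rcases hc with h | h | h <;> subst h <;>
          simp only [map_mul, map_inv, hsg, hrg] <;> tauto
      · refine Or.inr (Or.inr ⟨⟨i.val, by have := i.isLt; omega⟩, ?_⟩)
        subst hc
        simp only [map_mul, hsg, hrg]
    exact (QuotientGroup.eq_one_iff _).mpr (Subgroup.subset_normalClosure hmem))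

end UVB

/-- The elementary fused Markov moves on the disjoint union of the groups `UVB n`:
conjugation, and the three right stabilizations (positive, negative, virtual). -/
inductive MarkovBase : (Σ n, UVB n) → (Σ n, UVB n) → Prop
  | conj (n : ℕ) (α γ : UVB n) : MarkovBase ⟨n, α⟩ ⟨n, γ * α * γ⁻¹⟩
  | stabPos (n : ℕ) (α : UVB n) :
      MarkovBase ⟨n, α⟩ ⟨n + 1, UVB.incl n α * UVB.sigma (n + 1) n⟩
  | stabNeg (n : ℕ) (α : UVB n) :
      MarkovBase ⟨n, α⟩ ⟨n + 1, UVB.incl n α * (UVB.sigma (n + 1) n)⁻¹⟩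
  | stabVirt (n : ℕ) (α : UVB n) :
      MarkovBase ⟨n, α⟩ ⟨n + 1, UVB.incl n α * UVB.rho (n + 1) n⟩

/-- Fused Markov equivalence: the smallest equivalence relation generated by the
elementary Markov moves.  By Kamada's theorem, two unrestricted virtual braids are
fused Markov equivalent iff their closures are equivalent fused links. -/
def Markov : (Σ n, UVB n) → (Σ n, UVB n) → Prop := Relation.EqvGen MarkovBase

/-! ## Statement 1 -/

/-- Unordered pairs {i,j} ⊆ {1,…,n}, encoded as ordered pairs (i,j), i < j (0-based). -/
abbrev PairIdx (n : ℕ) := {p : Fin n × Fin n // p.1 < p.2}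

/-- The subgroup `⟨λ_{i,j}, λ_{j,i}⟩` of `UVP n` associated to an unordered pair {i,j}. -/
def pairSubgroup (n : ℕ) (p : PairIdx n) : Subgroup (UVB n) :=
  Subgroup.closure {UVB.lam n (p.1.1.val + 1) (p.1.2.val + 1),
                    UVB.lam n (p.1.2.val + 1) (p.1.1.val + 1)}

namespace UVBProof

open UVBGen

theorem mk_eq {n : ℕ} {a b : FreeGroup (UVBGen n)} (h : a * b⁻¹ ∈ uvbRels n) :
    PresentedGroup.mk (uvbRels n) a = PresentedGroup.mk (uvbRels n) b := by
  have := PresentedGroup.one_of_mem h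
  rw [map_mul, map_inv] at this
  exact mul_inv_eq_one.mp this

theorem sigma_eq {n k : ℕ} (h : 1 ≤ k ∧ k ≤ n - 1) :
    UVB.sigma n k = PresentedGroup.mk (uvbRels n) (sg ⟨k - 1, by omega⟩) := by
  simp only [UVB.sigma, h, and_self, dif_pos]; rfl

theorem rho_eq {n k : ℕ} (h : 1 ≤ k ∧ k ≤ n - 1) :
    UVB.rho n k = PresentedGroup.mk (uvbRels n) (rg ⟨k - 1, by omega⟩) := by
  simp only [UVB.rho, h, and_self, dif_pos]; rfl

theorem sigma_junk {n k : ℕ} (h : ¬ (1 ≤ k ∧ k ≤ n - 1)) : UVB.sigma n k = 1 := by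
  simp only [UVB.sigma, h, dif_neg, not_false_eq_true]

theorem rho_junk {n k : ℕ} (h : ¬ (1 ≤ k ∧ k ≤ n - 1)) : UVB.rho n k = 1 := by
  simp only [UVB.rho, h, dif_neg, not_false_eq_true]

theorem rho_sq (n k : ℕ) : UVB.rho n k * UVB.rho n k = 1 := by
  by_cases h : 1 ≤ k ∧ k ≤ n - 1
  · rw [rho_eq h, ← map_mul]
    exact PresentedGroup.one_of_mem (Or.inr (Or.inr ⟨_, rfl⟩))
  · rw [rho_junk h, one_mul]

theorem rho_comm (n : ℕ) {k l : ℕ} (hkl : k + 2 ≤ l) : Commute (UVB.rho n k) (UVB.rho n l) := by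
  by_cases h : 1 ≤ k ∧ k ≤ n - 1
  · by_cases h' : 1 ≤ l ∧ l ≤ n - 1
    · rw [rho_eq h, rho_eq h', Commute, SemiconjBy, ← map_mul, ← map_mul]
      exact mk_eq (Or.inr (Or.inl ⟨⟨k - 1, by omega⟩, ⟨l - 1, by omega⟩,
        Or.inl (by simp only; omega), Or.inr (Or.inl rfl)⟩))
    · rw [rho_junk h']; exact Commute.one_right _
  · rw [rho_junk h]; exact Commute.one_left _

theorem sigma_comm (n : ℕ) {k l : ℕ} (hkl : k + 2 ≤ l) :
    Commute (UVB.sigma n k) (UVB.sigma n l) := by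
  by_cases h : 1 ≤ k ∧ k ≤ n - 1
  · by_cases h' : 1 ≤ l ∧ l ≤ n - 1
    · rw [sigma_eq h, sigma_eq h', Commute, SemiconjBy, ← map_mul, ← map_mul]
      exact mk_eq (Or.inr (Or.inl ⟨⟨k - 1, by omega⟩, ⟨l - 1, by omega⟩,
        Or.inl (by simp only; omega), Or.inl rfl⟩))
    · rw [sigma_junk h']; exact Commute.one_right _
  · rw [sigma_junk h]; exact Commute.one_left _

theorem sigma_rho_comm (n : ℕ) {k l : ℕ} (hkl : k + 2 ≤ l ∨ l + 2 ≤ k) :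
    Commute (UVB.sigma n k) (UVB.rho n l) := by
  by_cases h : 1 ≤ k ∧ k ≤ n - 1
  · by_cases h' : 1 ≤ l ∧ l ≤ n - 1
    · rw [sigma_eq h, rho_eq h', Commute, SemiconjBy, ← map_mul, ← map_mul]
      exact mk_eq (Or.inr (Or.inl ⟨⟨k - 1, by omega⟩, ⟨l - 1, by omega⟩,
        (by simp only; omega), Or.inr (Or.inr rfl)⟩))
    · rw [rho_junk h']; exact Commute.one_right _
  · rw [sigma_junk h]; exact Commute.one_left _

/-- the five braid-like relations -/
theorem braid_rels (n : ℕ) {k : ℕ} (h1 : 1 ≤ k) (h2 : k + 1 ≤ n - 1) :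
    UVB.sigma n k * UVB.sigma n (k + 1) * UVB.sigma n k
      = UVB.sigma n (k + 1) * UVB.sigma n k * UVB.sigma n (k + 1) ∧
    UVB.rho n k * UVB.rho n (k + 1) * UVB.rho n k
      = UVB.rho n (k + 1) * UVB.rho n k * UVB.rho n (k + 1) ∧
    UVB.rho n k * UVB.rho n (k + 1) * UVB.sigma n k
      = UVB.sigma n (k + 1) * UVB.rho n k * UVB.rho n (k + 1) ∧
    UVB.rho n k * UVB.sigma n (k + 1) * UVB.sigma n k
      = UVB.sigma n (k + 1) * UVB.sigma n k * UVB.rho n (k + 1) ∧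
    UVB.rho n (k + 1) * UVB.sigma n k * UVB.sigma n (k + 1)
      = UVB.sigma n k * UVB.sigma n (k + 1) * UVB.rho n k := by
  have a : 1 ≤ k ∧ k ≤ n - 1 := by omega
  have b : 1 ≤ k + 1 ∧ k + 1 ≤ n - 1 := by omega
  rw [sigma_eq a, sigma_eq b, rho_eq a, rho_eq b]
  simp only [← map_mul]
  have ha : k - 1 < n - 1 := by omega
  have hb : k + 1 - 1 < n - 1 := by omega
  have key := fun r hr => (Or.inl ⟨⟨k - 1, ha⟩, ⟨k + 1 - 1, hb⟩, by simp only; omega, hr⟩ :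
    r ∈ uvbRels n)
  exact ⟨mk_eq (key _ (Or.inl rfl)), mk_eq (key _ (Or.inr (Or.inl rfl))),
    mk_eq (key _ (Or.inr (Or.inr (Or.inl rfl)))),
    mk_eq (key _ (Or.inr (Or.inr (Or.inr (Or.inl rfl))))),
    mk_eq (key _ (Or.inr (Or.inr (Or.inr (Or.inr rfl)))))⟩

/-! ### Conjugation chains -/

/-- `chain r x i d` is `r_{i+d} ⋯ r_{i+1} x_i r_{i+1} ⋯ r_{i+d}`. -/
def chain {G : Type*} [Group G] (r x : ℕ → G) (i : ℕ) : ℕ → G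
  | 0 => x i
  | d + 1 => r (i + d + 1) * chain r x i d * r (i + d + 1)

structure ChainHyp {G : Type*} [Group G] (N : ℕ) (r x : ℕ → G) : Prop where
  sq : ∀ k, r k * r k = 1
  comm : ∀ k l, k + 2 ≤ l → Commute (r k) (r l)
  braid : ∀ k, 1 ≤ k → k + 1 ≤ N → r k * r (k + 1) * r k = r (k + 1) * r k * r (k + 1)
  xcomm : ∀ k i, (k + 2 ≤ i ∨ i + 2 ≤ k) → Commute (r k) (x i)
  mix : ∀ k, 1 ≤ k → k + 1 ≤ N → r k * r (k + 1) * x k = x (k + 1) * r k * r (k + 1)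

namespace ChainHyp

variable {G : Type*} [Group G] {N : ℕ} {r x : ℕ → G}

theorem comm_low (h : ChainHyp N r x) {k i : ℕ} (hk : k + 2 ≤ i) (d : ℕ) :
    Commute (r k) (chain r x i d) := by
  induction d with
  | zero => exact h.xcomm _ _ (Or.inl hk)
  | succ d ih =>
    exact ((h.comm k _ (by omega)).mul_right ih).mul_right (h.comm k _ (by omega))

theorem comm_high (h : ChainHyp N r x) {k i d : ℕ} (hk : i + d + 2 ≤ k) :
    Commute (r k) (chain r x i d) := by
  induction d with
  | zero => exact h.xcomm _ _ (Or.inr hk)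
  | succ d ih =>
    exact (((h.comm _ k (by omega)).symm).mul_right (ih (by omega))).mul_right
      (h.comm _ k (by omega)).symm

theorem inv_eq (h : ChainHyp N r x) (k : ℕ) : (r k)⁻¹ = r k :=
  inv_eq_of_mul_eq_one_left (h.sq k)

theorem conj_conj (h : ChainHyp N r x) (k : ℕ) (y : G) : r k * (r k * y * r k) * r k = y := by
  calc _ = (r k * r k) * y * (r k * r k) := by group
    _ = y := by rw [h.sq]; group

theorem conj_swap (h : ChainHyp N r x) {k l : ℕ} (c : Commute (r k) (r l)) (y : G) :
    r k * (r l * y * r l) * r k = r l * (r k * y * r k) * r l := by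
  calc _ = (r k * r l) * y * (r l * r k) := by group
    _ = (r l * r k) * y * (r k * r l) := by rw [c.eq]
    _ = _ := by group

theorem conj_comm (h : ChainHyp N r x) {k : ℕ} {y : G} (c : Commute (r k) y) :
    r k * y * r k = y := by
  rw [c.eq, mul_assoc, h.sq, mul_one]

theorem conj_first (h : ChainHyp N r x) {i : ℕ} (h1 : 1 ≤ i) (h2 : i + 1 ≤ N) (d : ℕ) :
    r i * chain r x (i + 1) d * r i = chain r x i (d + 1) := by
  induction d with
  | zero =>
    have m := h.mix i h1 h2
    change r i * x (i + 1) * r i = r (i + 1) * x i * r (i + 1)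
    have e : x (i + 1) = r i * r (i + 1) * x i * r (i + 1) * r i := by
      rw [m]
      calc x (i + 1) = x (i + 1) * (r i * ((r (i + 1) * r (i + 1)) * r i)) := by
            rw [h.sq, one_mul, h.sq, mul_one]
        _ = _ := by group
    rw [e]
    calc _ = (r i * r i) * r (i + 1) * x i * r (i + 1) * (r i * r i) := by group
      _ = _ := by rw [h.sq]; group
  | succ d ih =>
    change r i * (r (i + 1 + d + 1) * chain r x (i + 1) d * r (i + 1 + d + 1)) * r i
      = r (i + (d + 1) + 1) * chain r x i (d + 1) * r (i + (d + 1) + 1)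
    rw [h.conj_swap (h.comm _ _ (by omega)), ih,
      show i + 1 + d + 1 = i + (d + 1) + 1 by omega]

theorem comm_mid (h : ChainHyp N r x) {k i d : ℕ} (h1 : i + 1 ≤ k) (h2 : k + 1 ≤ i + d)
    (h3 : i + d ≤ N) : Commute (r k) (chain r x i d) := by
  induction d with
  | zero => omega
  | succ d ih =>
    by_cases hk : k + 1 ≤ i + d
    · have c := h.comm k (i + d + 1) (by omega)
      exact (c.mul_right (ih hk (by omega))).mul_right c
    · obtain ⟨e, rfl⟩ : ∃ e, d = e + 1 := ⟨d - 1, by omega⟩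
      obtain rfl : k = i + e + 1 := by omega
      have b := h.braid (i + e + 1) (by omega) (by omega)
      have c : Commute (r (i + e + 1 + 1)) (chain r x i e) := h.comm_high (by omega)
      change r _ * (r (i + e + 1 + 1) * (r (i + e + 1) * chain r x i e * r (i + e + 1))
        * r (i + e + 1 + 1)) = (r (i + e + 1 + 1) * (r (i + e + 1) * chain r x i e * r (i + e + 1))
        * r (i + e + 1 + 1)) * r _
      generalize chain r x i e = y at *
      generalize r (i + e + 1 + 1) = t at *
      generalize r (i + e + 1) = s at *
      calc s * (t * (s * y * s) * t) = (s * t * s) * y * s * t := by group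
        _ = t * s * (t * y) * s * t := by rw [b]; group
        _ = t * s * y * (t * s * t) := by rw [c.eq]; group
        _ = _ := by rw [← b]; group

end ChainHyp

def xa (n i : ℕ) : UVB n := UVB.rho n i * (UVB.sigma n i)⁻¹
def xb (n i : ℕ) : UVB n := (UVB.sigma n i)⁻¹ * UVB.rho n i

theorem hyp_aux (n k : ℕ) (h1 : 1 ≤ k) (h2 : k + 1 ≤ n - 1) :
    UVB.rho n k * UVB.rho n (k + 1) * (UVB.sigma n k)⁻¹
      = (UVB.sigma n (k + 1))⁻¹ * (UVB.rho n k * UVB.rho n (k + 1)) := by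
  have m := (braid_rels n h1 h2).2.2.1
  rw [mul_inv_eq_iff_eq_mul, mul_assoc, m]
  group

theorem hyp_a (n : ℕ) : ChainHyp (n - 1) (UVB.rho n) (xa n) where
  sq := rho_sq n
  comm _ _ h := rho_comm n h
  braid k h1 h2 := (braid_rels n h1 h2).2.1
  xcomm k i h := by
    refine Commute.mul_right ?_ (sigma_rho_comm n (by omega)).symm.inv_right
    rcases h with h | h
    · exact rho_comm n h
    · exact (rho_comm n h).symm
  mix k h1 h2 := by
    have a := hyp_aux n k h1 h2
    have b := (braid_rels n h1 h2).2.1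
    unfold xa
    rw [← mul_assoc, b]
    rw [mul_assoc, mul_assoc, ← mul_assoc (UVB.rho n k), a]
    group

theorem hyp_b (n : ℕ) : ChainHyp (n - 1) (UVB.rho n) (xb n) where
  sq := rho_sq n
  comm _ _ h := rho_comm n h
  braid k h1 h2 := (braid_rels n h1 h2).2.1
  xcomm k i h := by
    refine Commute.mul_right (sigma_rho_comm n (by omega)).symm.inv_right ?_
    rcases h with h | h
    · exact rho_comm n h
    · exact (rho_comm n h).symm
  mix k h1 h2 := by
    have a := hyp_aux n k h1 h2
    have b := (braid_rels n h1 h2).2.1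
    unfold xb
    rw [← mul_assoc, a, mul_assoc, b]
    group

theorem chain_list {G : Type*} [Group G] (r x : ℕ → G) (i d : ℕ) :
    chain r x i d = ((List.range' (i + 1) d).reverse.map r).prod * x i *
      ((List.range' (i + 1) d).map r).prod := by
  induction d with
  | zero => simp [chain]
  | succ d ih =>
    rw [chain, ih, List.range'_concat]
    simp only [List.reverse_append, List.map_append, List.prod_append, List.reverse_cons,
      List.reverse_nil, List.map_cons, List.map_nil, List.nil_append, List.prod_cons,
      List.prod_nil, mul_one, one_mul]
    rw [show i + 1 + d = i + d + 1 by omega]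
    simp only [List.cons_append, List.nil_append, List.map_cons, List.prod_cons, mul_assoc]

theorem lam_a (n i d : ℕ) : UVB.lam n i (i + 1 + d) = chain (UVB.rho n) (xa n) i d := by
  rw [chain_list, UVB.lam, if_pos (by omega), show i + 1 + d - 1 - i = d by omega]
  rfl

theorem lam_b (n i d : ℕ) : UVB.lam n (i + 1 + d) i = chain (UVB.rho n) (xb n) i d := by
  rw [chain_list, UVB.lam, if_neg (by omega), if_pos (by omega),
    show i + 1 + d - 1 - i = d by omega]
  rfl

theorem chain_conj {G : Type*} [Group G] {N : ℕ} {r x y : ℕ → G} (h : ChainHyp N r x)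
    (F : ℕ → ℕ → G) (hF : ∀ i d, F i (i + 1 + d) = chain r x i d)
    (hF' : ∀ i, F (i + 1) i = y i) (hxy : ∀ i, r i * x i * r i = y i)
    {i j k : ℕ} (hi : 1 ≤ i) (hij : i < j) (hj : j ≤ N + 1) (hk : 1 ≤ k) (hk' : k ≤ N) :
    r k * F i j * r k = F (Equiv.swap k (k + 1) i) (Equiv.swap k (k + 1) j) := by
  obtain ⟨d, rfl⟩ : ∃ d, j = i + 1 + d := ⟨j - i - 1, by omega⟩
  rw [hF]
  by_cases c1 : k + 2 ≤ i ∨ i + d + 2 ≤ k ∨ (i + 1 ≤ k ∧ k + 1 ≤ i + d)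
  · rw [Equiv.swap_apply_of_ne_of_ne (by omega) (by omega),
      Equiv.swap_apply_of_ne_of_ne (by omega) (by omega), hF]
    apply h.conj_comm
    rcases c1 with c | c | c
    · exact h.comm_low c d
    · exact h.comm_high c
    · exact h.comm_mid c.1 c.2 (by omega)
  by_cases c2 : k + 1 = i
  · subst c2
    rw [Equiv.swap_apply_right, Equiv.swap_apply_of_ne_of_ne (by omega) (by omega),
      h.conj_first hk (by omega), ← hF]
    congr 1; omega
  by_cases c3 : k = i
  · subst c3
    rw [Equiv.swap_apply_left]
    rcases d with _ | d
    · rw [Nat.add_zero, Equiv.swap_apply_right, hF']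
      exact hxy k
    · rw [Equiv.swap_apply_of_ne_of_ne (by omega) (by omega),
        ← h.conj_first hk (by omega), h.conj_conj, ← hF]
      congr 1; omega
  rw [Equiv.swap_apply_of_ne_of_ne (by omega : i ≠ k) (by omega)]
  by_cases c4 : k = i + d
  · obtain ⟨e, rfl⟩ : ∃ e, d = e + 1 := ⟨d - 1, by omega⟩
    subst c4
    rw [show i + 1 + (e + 1) = i + (e + 1) + 1 by omega, Equiv.swap_apply_right]
    change r (i + e + 1) * (r (i + e + 1) * _ * r (i + e + 1)) * r (i + e + 1) = _
    rw [h.conj_conj, ← hF]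
    congr 1; omega
  · obtain rfl : k = i + d + 1 := by omega
    rw [show i + 1 + d = i + d + 1 by omega, Equiv.swap_apply_left,
      show i + d + 1 + 1 = i + 1 + (d + 1) by omega, hF]
    rfl

theorem lam_conj (n : ℕ) {i j k : ℕ} (hi : 1 ≤ i) (hj : 1 ≤ j) (hij : i ≠ j) (hi' : i ≤ n)
    (hj' : j ≤ n) (hk : 1 ≤ k) (hk' : k ≤ n - 1) :
    UVB.rho n k * UVB.lam n i j * UVB.rho n k
      = UVB.lam n (Equiv.swap k (k + 1) i) (Equiv.swap k (k + 1) j) := by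
  rcases lt_or_gt_of_ne hij with h | h
  · refine chain_conj (y := xb n) (hyp_a n) (UVB.lam n) (lam_a n) (fun i => lam_b n i 0) ?_ hi h
      (by omega) hk hk'
    intro i
    unfold xa xb
    rw [← mul_assoc, rho_sq, one_mul]
  · refine chain_conj (y := xa n) (hyp_b n) (fun a b => UVB.lam n b a) (lam_b n)
      (fun i => lam_a n i 0) ?_ hj h (by omega) hk hk'
    intro i
    unfold xa xb
    rw [mul_assoc, mul_assoc, rho_sq, mul_one]

end UVBProof
namespace UVBProof

def Lam {n : ℕ} (i j : Fin n) : UVB n := UVB.lam n (i.val + 1) (j.val + 1)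

theorem swap_val {n k : ℕ} (h1 : k - 1 < n) (h2 : k < n) (hk : 1 ≤ k) (i : Fin n) :
    ((Equiv.swap (⟨k - 1, h1⟩ : Fin n) ⟨k, h2⟩ i : Fin n) : ℕ) + 1
      = Equiv.swap k (k + 1) (i.val + 1) := by
  simp only [Equiv.swap_apply_def, Fin.ext_iff]
  split_ifs <;> simp_all <;> omega

theorem Lam_conj_rho {n k : ℕ} (hk : 1 ≤ k) (hk' : k ≤ n - 1) (h1 : k - 1 < n) (h2 : k < n)
    {i j : Fin n} (hij : i ≠ j) :
    UVB.rho n k * Lam i j * (UVB.rho n k)⁻¹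
      = Lam (Equiv.swap (⟨k - 1, h1⟩ : Fin n) ⟨k, h2⟩ i)
          (Equiv.swap (⟨k - 1, h1⟩ : Fin n) ⟨k, h2⟩ j) := by
  have hi := i.isLt
  have hj := j.isLt
  have hne : (i : ℕ) ≠ j := fun h => hij (Fin.ext h)
  unfold Lam
  rw [swap_val h1 h2 hk, swap_val h1 h2 hk, ← lam_conj n (by omega) (by omega) (by omega)
    (by omega) (by omega) hk hk', inv_eq_of_mul_eq_one_left (rho_sq n k)]

theorem Lam_conj_perm {n : ℕ} (π : Equiv.Perm (Fin n)) :
    ∃ g : UVB n, ∀ i j : Fin n, i ≠ j → g * Lam i j * g⁻¹ = Lam (π i) (π j) := by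
  rcases n with _ | m
  · exact ⟨1, fun i => i.elim0⟩
  have hπ : π ∈ Submonoid.closure (Set.range fun i : Fin m ↦ Equiv.swap i.castSucc i.succ) := by
    rw [Equiv.Perm.mclosure_swap_castSucc_succ]; trivial
  induction hπ using Submonoid.closure_induction with
  | mem x hx =>
    obtain ⟨k, rfl⟩ := hx
    refine ⟨UVB.rho (m + 1) (k.val + 1), fun i j hij => ?_⟩
    have := k.isLt
    exact Lam_conj_rho (by omega) (by omega) (by omega) (by omega) hij
  | one => exact ⟨1, fun i j _ => by simp⟩
  | mul x y _ _ hx hy =>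
    obtain ⟨g, hg⟩ := hx
    obtain ⟨g', hg'⟩ := hy
    refine ⟨g * g', fun i j hij => ?_⟩
    rw [Equiv.Perm.mul_apply, Equiv.Perm.mul_apply, ← hg _ _ (fun h => hij (y.injective h)),
      ← hg' _ _ hij]
    group

theorem comm_transport {n : ℕ} (π : Equiv.Perm (Fin n)) {a b c d : Fin n} (hab : a ≠ b)
    (hcd : c ≠ d) (h : Commute (Lam a b) (Lam c d)) :
    Commute (Lam (π a) (π b)) (Lam (π c) (π d)) := by
  obtain ⟨g, hg⟩ := Lam_conj_perm π
  rw [← hg _ _ hab, ← hg _ _ hcd]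
  exact h.map (MulAut.conj g).toMonoidHom

theorem exists_perm {n m : ℕ} (x y : Fin m → Fin n) (hx : Function.Injective x)
    (hy : Function.Injective y) : ∃ π : Equiv.Perm (Fin n), ∀ i, π (x i) = y i := by
  have := Equiv.Perm.isMultiplyPretransitive (Fin n) m
  obtain ⟨g, hg⟩ := this.exists_smul_eq (⟨x, hx⟩ : Fin m ↪ Fin n) ⟨y, hy⟩
  exact ⟨g, fun i => by simpa using congrArg (fun f : Fin m ↪ Fin n => f i) hg⟩

theorem comm_of_rels {G : Type*} [Group G] {s t p q u : G} (hs : s * s = 1) (ht : t * t = 1)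
    (hb : s * t * s = t * s * t) (hq : s * q * s = u) (hp : t * p * t = u)
    (r1 : (p⁻¹ * s) * (q⁻¹ * t) * (p⁻¹ * s) = (q⁻¹ * t) * (p⁻¹ * s) * (q⁻¹ * t))
    (r4 : s * (q⁻¹ * t) * (p⁻¹ * s) = (q⁻¹ * t) * (p⁻¹ * s) * t)
    (r5 : t * (p⁻¹ * s) * (q⁻¹ * t) = (p⁻¹ * s) * (q⁻¹ * t) * s) :
    Commute p u ∧ Commute u q ∧ Commute p q := by
  have is : s⁻¹ = s := inv_eq_of_mul_eq_one_left hs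
  have it : t⁻¹ = t := inv_eq_of_mul_eq_one_left ht
  have hss : ∀ z, s * (s * z) = z := fun z => by rw [← mul_assoc, hs, one_mul]
  have htt : ∀ z, t * (t * z) = z := fun z => by rw [← mul_assoc, ht, one_mul]
  have eu : u⁻¹ = s * q⁻¹ * s := by rw [← hq]; simp only [mul_inv_rev, is, mul_assoc]
  have eu' : u⁻¹ = t * p⁻¹ * t := by rw [← hp]; simp only [mul_inv_rev, it, mul_assoc]
  have sq : ∀ z, s * (q⁻¹ * z) = u⁻¹ * (s * z) := fun z => by
    rw [eu]; simp only [mul_assoc, hss]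
  have tp : ∀ z, t * (p⁻¹ * z) = u⁻¹ * (t * z) := fun z => by
    rw [eu']; simp only [mul_assoc, htt]
  have su : ∀ z, s * (u⁻¹ * z) = q⁻¹ * (s * z) := fun z => by
    rw [eu]; simp only [mul_assoc, hss]
  have tu : ∀ z, t * (u⁻¹ * z) = p⁻¹ * (t * z) := fun z => by
    rw [eu']; simp only [mul_assoc, htt]
  have hb' : s * (t * s) = t * (s * t) := by simpa only [mul_assoc] using hb
  simp only [mul_assoc, sq, tp, su, tu, hb'] at r1 r4 r5
  have k4 : u⁻¹ * q⁻¹ = q⁻¹ * u⁻¹ := by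
    apply mul_right_cancel (b := t * (s * t)); simpa only [mul_assoc] using r4
  have k5 : u⁻¹ * p⁻¹ = p⁻¹ * u⁻¹ := by
    apply mul_right_cancel (b := t * (s * t)); simpa only [mul_assoc] using r5
  have k1 : p⁻¹ * u⁻¹ * q⁻¹ = q⁻¹ * u⁻¹ * p⁻¹ := by
    apply mul_right_cancel (b := t * (s * t)); simpa only [mul_assoc] using r1
  have c4 : Commute u q := by simpa using (show Commute u⁻¹ q⁻¹ from k4)
  have c5 : Commute u p := by simpa using (show Commute u⁻¹ p⁻¹ from k5)
  refine ⟨c5.symm, c4, ?_⟩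
  rw [← k5, ← k4, mul_assoc, mul_assoc] at k1
  simpa using (show Commute p⁻¹ q⁻¹ from mul_left_cancel k1)

theorem base3 {n : ℕ} (hn : 3 ≤ n) :
    let a : Fin n := ⟨0, by omega⟩
    let b : Fin n := ⟨1, by omega⟩
    let c : Fin n := ⟨2, by omega⟩
    Commute (Lam a b) (Lam a c) ∧ Commute (Lam a c) (Lam b c) ∧ Commute (Lam a b) (Lam b c) := by
  intro a b c
  have e1 : Lam a b = UVB.rho n 1 * (UVB.sigma n 1)⁻¹ := lam_a n 1 0
  have e2 : Lam b c = UVB.rho n 2 * (UVB.sigma n 2)⁻¹ := lam_a n 2 0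
  obtain ⟨b1, b2, b3, b4, b5⟩ := braid_rels n (k := 1) le_rfl (by omega)
  have s1 : UVB.sigma n 1 = (Lam a b)⁻¹ * UVB.rho n 1 := by rw [e1]; group
  have s2 : UVB.sigma n 2 = (Lam b c)⁻¹ * UVB.rho n 2 := by rw [e2]; group
  simp only [show 1 + 1 = 2 from rfl] at b1 b2 b3 b4 b5
  rw [s1, s2] at b1 b4 b5
  refine comm_of_rels (rho_sq n 1) (rho_sq n 2) b2 ?_ ?_ b1 b4 b5
  · exact lam_conj n (i := 2) (j := 3) (k := 1) (by omega) (by omega) (by omega) (by omega)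
      (by omega) (by omega) (by omega)
  · exact lam_conj n (i := 1) (j := 2) (k := 2) (by omega) (by omega) (by omega) (by omega)
      (by omega) (by omega) (by omega)

theorem three {n : ℕ} {i j k : Fin n} (hij : i ≠ j) (hik : i ≠ k) (hjk : j ≠ k) :
    Commute (Lam i j) (Lam i k) ∧ Commute (Lam i k) (Lam j k) ∧ Commute (Lam i j) (Lam j k) := by
  have hn : 3 ≤ n := by
    have : Function.Injective ![i, j, k] := by
      intro a b; fin_cases a <;> fin_cases b <;> simp_all [eq_comm]
    simpa using Fintype.card_le_of_injective _ this
  obtain ⟨π, hπ⟩ := exists_perm ![(⟨0, by omega⟩ : Fin n), ⟨1, by omega⟩, ⟨2, by omega⟩] ![i, j, k]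
    (by intro a b; fin_cases a <;> fin_cases b <;> simp)
    (by intro a b; fin_cases a <;> fin_cases b <;> simp_all [eq_comm])
  have h0 := hπ 0
  have h1 := hπ 1
  have h2 := hπ 2
  simp at h0 h1 h2
  obtain ⟨c1, c2, c3⟩ := base3 hn
  rw [← h0, ← h1, ← h2]
  refine ⟨comm_transport π ?_ ?_ c1, comm_transport π ?_ ?_ c2, comm_transport π ?_ ?_ c3⟩ <;>
    simp

theorem four {n : ℕ} {i j k l : Fin n} (hij : i ≠ j) (hik : i ≠ k) (hil : i ≠ l) (hjk : j ≠ k)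
    (hjl : j ≠ l) (hkl : k ≠ l) : Commute (Lam i j) (Lam k l) := by
  have inj : Function.Injective ![i, j, k, l] := by
    intro a b; fin_cases a <;> fin_cases b <;> simp_all [eq_comm]
  have hn : 4 ≤ n := by
    simpa using Fintype.card_le_of_injective _ inj
  obtain ⟨π, hπ⟩ := exists_perm
    ![(⟨0, by omega⟩ : Fin n), ⟨1, by omega⟩, ⟨2, by omega⟩, ⟨3, by omega⟩] ![i, j, k, l]
    (by intro a b; fin_cases a <;> fin_cases b <;> simp) inj
  have h0 := hπ 0
  have h1 := hπ 1
  have h2 := hπ 2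
  have h3 := hπ 3
  simp at h0 h1 h2 h3
  rw [← h0, ← h1, ← h2, ← h3]
  refine comm_transport π (by simp) (by simp) ?_
  have e1 : Lam (⟨0, by omega⟩ : Fin n) ⟨1, by omega⟩ = UVB.rho n 1 * (UVB.sigma n 1)⁻¹ :=
    lam_a n 1 0
  have e2 : Lam (⟨2, by omega⟩ : Fin n) ⟨3, by omega⟩ = UVB.rho n 3 * (UVB.sigma n 3)⁻¹ :=
    lam_a n 3 0
  rw [e1, e2]
  have a1 := rho_comm n (k := 1) (l := 3) le_rfl
  have a2 := sigma_comm n (k := 1) (l := 3) le_rfl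
  have a3 := sigma_rho_comm n (k := 1) (l := 3) (by omega)
  have a4 := sigma_rho_comm n (k := 3) (l := 1) (by omega)
  exact (a1.mul_right a4.symm.inv_right).mul_left (a3.inv_left.mul_right a2.inv_inv)

theorem Lam_comm {n : ℕ} {i j k l : Fin n} (hij : i ≠ j) (hkl : k ≠ l)
    (h1 : ¬ (i = k ∧ j = l)) (h2 : ¬ (i = l ∧ j = k)) : Commute (Lam i j) (Lam k l) := by
  by_cases a : i = k
  · subst a
    exact (three hij hkl (fun h => h1 ⟨rfl, h⟩)).1
  by_cases b : i = l
  · subst b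
    exact (three hkl (fun h => h2 ⟨rfl, h.symm⟩) hij).2.2.symm
  by_cases c : j = k
  · subst c
    exact (three hij b hkl).2.2
  by_cases d : j = l
  · subst d
    exact (three a hij hkl).2.1
  exact four hij a b c d hkl

/-! ### The symmetric group part -/

/-- subgroup generated by the first virtual generators -/
def R (n m : ℕ) : Subgroup (UVB n) :=
  Subgroup.closure {x | ∃ k, 1 ≤ k ∧ k + 1 ≤ m ∧ x = UVB.rho n k}

theorem rho_mem_R {n m k : ℕ} (h1 : 1 ≤ k) (h2 : k + 1 ≤ m) : UVB.rho n k ∈ R n m :=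
  Subgroup.subset_closure ⟨k, h1, h2, rfl⟩

/-- `D n m e = ρ_m ρ_{m-1} ⋯ ρ_{m-e+1}`. -/
def D (n m : ℕ) : ℕ → UVB n
  | 0 => 1
  | e + 1 => D n m e * UVB.rho n (m - e)

theorem D_low {n m e j : ℕ} (h : j + e + 1 ≤ m) :
    D n m e * UVB.rho n j = UVB.rho n j * D n m e := by
  induction e with
  | zero => simp [D]
  | succ e ih =>
    rw [D, mul_assoc, ← (rho_comm n (k := j) (l := m - e) (by omega)).eq, ← mul_assoc,
      ih (by omega), mul_assoc]

theorem D_high {n m e j : ℕ} (hm : m + 1 ≤ n) (he : e ≤ m) (hj : j ≤ m) (h : m + 2 ≤ j + e) :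
    D n m e * UVB.rho n j = UVB.rho n (j - 1) * D n m e := by
  induction e with
  | zero => omega
  | succ e ih =>
    by_cases c : m + 2 ≤ j + e
    · rw [D, mul_assoc, (rho_comm n (k := m - e) (l := j) (by omega)).eq, ← mul_assoc,
        ih (by omega) c, mul_assoc]
    · obtain ⟨f, rfl⟩ : ∃ f, e = f + 1 := ⟨e - 1, by omega⟩
      obtain ⟨i, rfl⟩ : ∃ i, j = i + 1 := ⟨j - 1, by omega⟩
      rw [D, D, show m - f = i + 1 by omega, show m - (f + 1) = i by omega,
        show i + 1 - 1 = i by omega]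
      have b := (braid_rels n (k := i) (by omega) (by omega)).2.1
      have l := D_low (n := n) (m := m) (e := f) (j := i) (by omega)
      calc _ = D n m f * (UVB.rho n (i + 1) * UVB.rho n i * UVB.rho n (i + 1)) := by group
        _ = (D n m f * UVB.rho n i) * UVB.rho n (i + 1) * UVB.rho n i := by rw [← b]; group
        _ = _ := by rw [l]; group

theorem R_factor {n m : ℕ} (hm : m + 1 ≤ n) {w : UVB n} (hw : w ∈ R n (m + 1)) :
    ∃ r ∈ R n m, ∃ e ≤ m, w = r * D n m e := by
  have step : ∀ k, 1 ≤ k → k + 1 ≤ m + 1 → ∀ w : UVB n,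
      (∃ r ∈ R n m, ∃ e ≤ m, w = r * D n m e) →
      (∃ r ∈ R n m, ∃ e ≤ m, w * UVB.rho n k = r * D n m e) := by
    rintro k h1 h2 _ ⟨r, hr, e, he, rfl⟩
    by_cases c1 : k + e + 1 ≤ m
    · exact ⟨r * UVB.rho n k, mul_mem hr (rho_mem_R h1 (by omega)), e, he, by
        rw [mul_assoc, D_low c1, mul_assoc]⟩
    by_cases c2 : k + e = m
    · exact ⟨r, hr, e + 1, by omega, by rw [D, show m - e = k by omega, mul_assoc]⟩
    by_cases c3 : k + e = m + 1
    · obtain ⟨f, rfl⟩ : ∃ f, e = f + 1 := ⟨e - 1, by omega⟩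
      exact ⟨r, hr, f, by omega, by
        rw [D, show m - f = k by omega, mul_assoc, mul_assoc, rho_sq, mul_one]⟩
    · exact ⟨r * UVB.rho n (k - 1), mul_mem hr (rho_mem_R (by omega) (by omega)), e, he, by
        rw [mul_assoc, D_high hm he (by omega) (by omega), mul_assoc]⟩
  induction hw using Subgroup.closure_induction_right with
  | one => exact ⟨1, one_mem _, 0, by omega, by simp [D]⟩
  | mul_right x _ y hy ih =>
    obtain ⟨k, h1, h2, rfl⟩ := hy
    exact step k h1 h2 _ ih
  | mul_inv_cancel x _ y hy ih =>
    obtain ⟨k, h1, h2, rfl⟩ := hy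
    rw [inv_eq_of_mul_eq_one_left (rho_sq n k)]
    exact step k h1 h2 _ ih

theorem iota_D {n m : ℕ} (ι : UVB n →* Equiv.Perm (Fin n)) (hι : IsIota n ι) (hm : m + 1 ≤ n)
    (e : ℕ) (he : e ≤ m) : ι (D n m e) ⟨m - e, by omega⟩ = ⟨m, by omega⟩ := by
  induction e with
  | zero => simp [D]
  | succ e ih =>
    rw [D, map_mul, Equiv.Perm.mul_apply, (hι (m - e) (by omega) (by omega)).2]
    have : (⟨m - (e + 1), by omega⟩ : Fin n) = ⟨m - e - 1, by omega⟩ := by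
      ext; simp only; omega
    rw [this, Equiv.swap_apply_left, ih (by omega)]

theorem iota_R {n m : ℕ} (ι : UVB n →* Equiv.Perm (Fin n)) (hι : IsIota n ι) (hm : m + 1 ≤ n)
    {r : UVB n} (hr : r ∈ R n m) : ι r ⟨m, by omega⟩ = ⟨m, by omega⟩ := by
  have : R n m ≤ (MulAction.stabilizer (Equiv.Perm (Fin n)) (⟨m, by omega⟩ : Fin n)).comap ι := by
    refine (Subgroup.closure_le _).mpr ?_
    rintro _ ⟨k, h1, h2, rfl⟩
    simp only [Subgroup.coe_comap, Set.mem_preimage, SetLike.mem_coe, MulAction.mem_stabilizer_iff,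
      Equiv.Perm.smul_def]
    rw [(hι k h1 (by omega)).2]
    apply Equiv.swap_apply_of_ne_of_ne <;> simp only [ne_eq, Fin.mk.injEq] <;> omega
  exact this hr

theorem R_inj {n : ℕ} (ι : UVB n →* Equiv.Perm (Fin n)) (hι : IsIota n ι) (m : ℕ) (hm : m ≤ n)
    {w : UVB n} (hw : w ∈ R n m) (h : ι w = 1) : w = 1 := by
  induction m generalizing w with
  | zero =>
    have : R n 0 = ⊥ := by
      rw [R, Subgroup.closure_eq_bot_iff]
      rintro _ ⟨k, h1, h2, rfl⟩
      omega
    rwa [this, Subgroup.mem_bot] at hw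
  | succ m ih =>
    obtain ⟨r, hr, e, he, rfl⟩ := R_factor hm hw
    have a := iota_D ι hι hm e he
    have b := iota_R ι hι hm hr
    rw [map_mul] at h
    have c := congrArg (fun f : Equiv.Perm (Fin n) => f ⟨m - e, by omega⟩) h
    simp only [Equiv.Perm.mul_apply, a, b, Equiv.Perm.one_apply, Fin.mk.injEq] at c
    obtain rfl : e = 0 := by omega
    simp only [D, mul_one, map_one] at h ⊢
    exact ih (by omega) hr h

/-! ### Generation -/

/-- The subgroup generated by all λ's. -/
def H (n : ℕ) : Subgroup (UVB n) :=
  Subgroup.closure {x | ∃ i j : Fin n, i ≠ j ∧ x = Lam i j}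

theorem Lam_mem_H {n : ℕ} {i j : Fin n} (h : i ≠ j) : Lam i j ∈ H n :=
  Subgroup.subset_closure ⟨i, j, h, rfl⟩

theorem rho_conj_H {n k : ℕ} (h1 : 1 ≤ k) (h2 : k ≤ n - 1) {x : UVB n} (hx : x ∈ H n) :
    UVB.rho n k * x * (UVB.rho n k)⁻¹ ∈ H n := by
  have : H n ≤ (H n).comap (MulAut.conj (UVB.rho n k)).toMonoidHom := by
    refine (Subgroup.closure_le _).mpr ?_
    rintro _ ⟨i, j, hij, rfl⟩
    change UVB.rho n k * Lam i j * (UVB.rho n k)⁻¹ ∈ H n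
    rw [Lam_conj_rho h1 h2 (by omega) (by omega) hij]
    exact Lam_mem_H (fun h => hij (Equiv.injective _ h))
  exact this hx

theorem sup_top (n : ℕ) : R n n ⊔ H n = ⊤ := by
  rw [eq_top_iff, ← PresentedGroup.closure_range_of, Subgroup.closure_le]
  have hr : ∀ i : Fin (n - 1), (PresentedGroup.of (Sum.inr i) : UVB n) ∈ R n n := by
    intro i
    have hi := i.isLt
    have : UVB.rho n (i.val + 1) = PresentedGroup.of (Sum.inr i) := by
      rw [rho_eq (by omega)]; rfl
    rw [← this]
    exact rho_mem_R (by omega) (by omega)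
  rintro _ ⟨i | i, rfl⟩
  · have hi := i.isLt
    have e1 : UVB.rho n (i.val + 1) = PresentedGroup.of (Sum.inr i) := by
      rw [rho_eq (by omega)]; rfl
    have e2 : UVB.sigma n (i.val + 1) = PresentedGroup.of (Sum.inl i) := by
      rw [sigma_eq (by omega)]; rfl
    have l : Lam (⟨i.val, by omega⟩ : Fin n) ⟨i.val + 1, by omega⟩
        = UVB.rho n (i.val + 1) * (UVB.sigma n (i.val + 1))⁻¹ := lam_a n (i.val + 1) 0
    have m : Lam (⟨i.val, by omega⟩ : Fin n) ⟨i.val + 1, by omega⟩ ∈ H n :=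
      Lam_mem_H (by simp)
    have : (PresentedGroup.of (Sum.inl i) : UVB n)
      = (Lam (⟨i.val, by omega⟩ : Fin n) ⟨i.val + 1, by omega⟩)⁻¹ * UVB.rho n (i.val + 1) := by
      rw [l, ← e2]; group
    rw [this, e1]
    exact mul_mem (inv_mem (Subgroup.mem_sup_right m)) (Subgroup.mem_sup_left (hr i))
  · exact Subgroup.mem_sup_left (hr i)

theorem H_normal (n : ℕ) : (H n).Normal := by
  rw [← Subgroup.normalizer_eq_top_iff, eq_top_iff, ← sup_top n]
  refine sup_le ?_ Subgroup.le_normalizer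
  refine (Subgroup.closure_le _).mpr ?_
  rintro _ ⟨k, h1, h2, rfl⟩
  refine Subgroup.mem_normalizer_iff.mpr fun x => ⟨rho_conj_H h1 (by omega), fun hx => ?_⟩
  have := rho_conj_H h1 (by omega) hx
  rw [inv_eq_of_mul_eq_one_left (rho_sq n k)] at this
  convert this using 1
  calc x = 1 * x * 1 := by group
    _ = _ := by rw [← rho_sq n k]; group

theorem iota_Lam {n : ℕ} (ι : UVB n →* Equiv.Perm (Fin n)) (hι : IsIota n ι)
    {i j : Fin n} (h : i ≠ j) : ι (Lam i j) = 1 := by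
  have hn : 2 ≤ n := by
    have := i.isLt
    have := j.isLt
    have : (i : ℕ) ≠ j := fun e => h (Fin.ext e)
    omega
  obtain ⟨π, hπ⟩ := exists_perm ![(⟨0, by omega⟩ : Fin n), ⟨1, by omega⟩] ![i, j]
    (by intro a b; fin_cases a <;> fin_cases b <;> simp)
    (by intro a b; fin_cases a <;> fin_cases b <;> simp_all [eq_comm])
  have h0 := hπ 0
  have h1 := hπ 1
  simp at h0 h1
  obtain ⟨g, hg⟩ := Lam_conj_perm π
  have e1 : Lam (⟨0, by omega⟩ : Fin n) ⟨1, by omega⟩ = UVB.rho n 1 * (UVB.sigma n 1)⁻¹ :=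
    lam_a n 1 0
  obtain ⟨q1, q2⟩ := hι 1 le_rfl (by omega)
  rw [← h0, ← h1, ← hg _ _ (by simp), e1]
  simp only [map_mul, map_inv, q1, q2]
  group

theorem H_eq_ker {n : ℕ} (ι : UVB n →* Equiv.Perm (Fin n)) (hι : IsIota n ι) : H n = ι.ker := by
  have le : H n ≤ ι.ker := by
    refine (Subgroup.closure_le _).mpr ?_
    rintro _ ⟨i, j, hij, rfl⟩
    exact iota_Lam ι hι hij
  refine le_antisymm le fun x hx => ?_
  have := H_normal n
  have hx' : x ∈ R n n ⊔ H n := by rw [sup_top]; trivial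
  obtain ⟨w, hw, h, hh, rfl⟩ := Subgroup.mem_sup_of_normal_right.mp hx'
  have e : ι h = 1 := le hh
  have : ι w = 1 := by
    have := MonoidHom.mem_ker.mp hx
    rwa [map_mul, e, mul_one] at this
  rw [R_inj ι hι n le_rfl hw this, one_mul]
  exact hh

theorem H_eq_iSup (n : ℕ) : H n = ⨆ p : PairIdx n, pairSubgroup n p := by
  apply le_antisymm
  · refine (Subgroup.closure_le _).mpr ?_
    rintro _ ⟨i, j, hij, rfl⟩
    rcases lt_or_gt_of_ne hij with h | h
    · exact Subgroup.mem_iSup_of_mem (⟨(i, j), h⟩ : PairIdx n)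
        (Subgroup.subset_closure (Or.inl rfl))
    · exact Subgroup.mem_iSup_of_mem (⟨(j, i), h⟩ : PairIdx n)
        (Subgroup.subset_closure (Or.inr rfl))
  · refine iSup_le fun p => (Subgroup.closure_le _).mpr ?_
    rintro _ (rfl | rfl)
    · exact Lam_mem_H p.2.ne
    · exact Lam_mem_H p.2.ne'

end UVBProof
namespace UVBProof

/-! ### The model: a semidirect product -/

/-- Functions on ordered pairs with values in the free group of rank two. -/
abbrev NN (n : ℕ) := Fin n × Fin n → FreeGroup Bool

/-- Permutation action on `NN n`. -/
def act (n : ℕ) : Equiv.Perm (Fin n) →* MulAut (NN n) where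
  toFun π :=
    { toFun := fun f p => f (π⁻¹ p.1, π⁻¹ p.2)
      invFun := fun f p => f (π p.1, π p.2)
      left_inv := fun f => by ext p; simp
      right_inv := fun f => by ext p; simp
      map_mul' := fun f g => rfl }
  map_one' := by ext f p; rfl
  map_mul' π τ := by ext f p; simp [MulAut.mul_apply, mul_inv_rev]

theorem act_apply {n : ℕ} (π : Equiv.Perm (Fin n)) (f : NN n) (p : Fin n × Fin n) :
    act n π f p = f (π⁻¹ p.1, π⁻¹ p.2) := rfl

def ML {n : ℕ} (i j : Fin n) : NN n := fun p =>
  if p = (i, j) then FreeGroup.of true else if p = (j, i) then FreeGroup.of false else 1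

theorem act_ML {n : ℕ} (π : Equiv.Perm (Fin n)) (i j : Fin n) :
    act n π (ML i j) = ML (π i) (π j) := by
  funext ⟨a, b⟩
  simp only [act_apply, ML, Prod.mk.injEq, Equiv.Perm.inv_eq_iff_eq]

theorem ML_comm {n : ℕ} {i j k l : Fin n}
    (h1 : ¬ (i = k ∧ j = l)) (h2 : ¬ (i = l ∧ j = k)) : Commute (ML i j) (ML k l) := by
  refine Pi.commute_iff.mpr ?_
  rintro ⟨a, b⟩
  simp only [ML, Prod.mk.injEq]
  by_cases c : (a = i ∧ b = j) ∨ (a = j ∧ b = i)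
  · have e1 : ¬ (a = k ∧ b = l) := by
      rintro ⟨rfl, rfl⟩; rcases c with ⟨rfl, rfl⟩ | ⟨rfl, rfl⟩ <;> simp_all
    have e2 : ¬ (a = l ∧ b = k) := by
      rintro ⟨rfl, rfl⟩; rcases c with ⟨rfl, rfl⟩ | ⟨rfl, rfl⟩ <;> simp_all
    rw [if_neg e1, if_neg e2]
    exact Commute.one_right _
  · rw [not_or] at c
    rw [if_neg c.1, if_neg c.2]
    exact Commute.one_left _

abbrev GG (n : ℕ) := NN n ⋊[act n] Equiv.Perm (Fin n)

def gl {n : ℕ} (i j : Fin n) : GG n := SemidirectProduct.inl (ML i j)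
def gr {n : ℕ} (π : Equiv.Perm (Fin n)) : GG n := SemidirectProduct.inr π

theorem gr_mul {n : ℕ} (π τ : Equiv.Perm (Fin n)) : gr π * gr τ = gr (π * τ) :=
  (map_mul SemidirectProduct.inr π τ).symm

theorem gr_conj {n : ℕ} (π : Equiv.Perm (Fin n)) (i j : Fin n) :
    gr π * gl i j * (gr π)⁻¹ = gl (π i) (π j) := by
  unfold gr gl
  rw [← act_ML, SemidirectProduct.inl_aut, map_inv]

theorem gl_comm {n : ℕ} {i j k l : Fin n}
    (h1 : ¬ (i = k ∧ j = l)) (h2 : ¬ (i = l ∧ j = k)) : Commute (gl i j) (gl k l) :=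
  (ML_comm h1 h2).map SemidirectProduct.inl

theorem gr_gl_comm {n : ℕ} {i j : Fin n} (π : Equiv.Perm (Fin n)) (hi : π i = i) (hj : π j = j) :
    Commute (gr π) (gl i j) := by
  have := gr_conj π i j
  rw [hi, hj] at this
  exact mul_inv_eq_iff_eq_mul.mp this

theorem rels_of_comm {G : Type*} [Group G] {s t p q u : G} (hs : s * s = 1) (ht : t * t = 1)
    (hb : s * t * s = t * s * t) (hq : s * q * s = u) (hp : t * p * t = u)
    (c1 : Commute p u) (c2 : Commute u q) (c3 : Commute p q) :
    (p⁻¹ * s) * (q⁻¹ * t) * (p⁻¹ * s) = (q⁻¹ * t) * (p⁻¹ * s) * (q⁻¹ * t) ∧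
    s * t * (p⁻¹ * s) = (q⁻¹ * t) * s * t ∧
    s * (q⁻¹ * t) * (p⁻¹ * s) = (q⁻¹ * t) * (p⁻¹ * s) * t ∧
    t * (p⁻¹ * s) * (q⁻¹ * t) = (p⁻¹ * s) * (q⁻¹ * t) * s := by
  have is : s⁻¹ = s := inv_eq_of_mul_eq_one_left hs
  have it : t⁻¹ = t := inv_eq_of_mul_eq_one_left ht
  have hss : ∀ z, s * (s * z) = z := fun z => by rw [← mul_assoc, hs, one_mul]
  have htt : ∀ z, t * (t * z) = z := fun z => by rw [← mul_assoc, ht, one_mul]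
  have eu : u⁻¹ = s * q⁻¹ * s := by rw [← hq]; simp only [mul_inv_rev, is, mul_assoc]
  have eu' : u⁻¹ = t * p⁻¹ * t := by rw [← hp]; simp only [mul_inv_rev, it, mul_assoc]
  have sq : ∀ z, s * (q⁻¹ * z) = u⁻¹ * (s * z) := fun z => by
    rw [eu]; simp only [mul_assoc, hss]
  have tp : ∀ z, t * (p⁻¹ * z) = u⁻¹ * (t * z) := fun z => by
    rw [eu']; simp only [mul_assoc, htt]
  have su : ∀ z, s * (u⁻¹ * z) = q⁻¹ * (s * z) := fun z => by
    rw [eu]; simp only [mul_assoc, hss]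
  have tu : ∀ z, t * (u⁻¹ * z) = p⁻¹ * (t * z) := fun z => by
    rw [eu']; simp only [mul_assoc, htt]
  have hb' : s * (t * s) = t * (s * t) := by simpa only [mul_assoc] using hb
  have k1 : ∀ z, p⁻¹ * (u⁻¹ * z) = u⁻¹ * (p⁻¹ * z) := fun z => by
    rw [← mul_assoc, c1.inv_inv.eq, mul_assoc]
  have k2 : ∀ z, q⁻¹ * (u⁻¹ * z) = u⁻¹ * (q⁻¹ * z) := fun z => by
    rw [← mul_assoc, ← c2.inv_inv.eq, mul_assoc]
  have k3 : ∀ z, q⁻¹ * (p⁻¹ * z) = p⁻¹ * (q⁻¹ * z) := fun z => by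
    rw [← mul_assoc, ← c3.inv_inv.eq, mul_assoc]
  refine ⟨?_, ?_, ?_, ?_⟩
  · simp only [mul_assoc, sq, tp, su, tu, hb', k1, k2, k3]
  · simp only [mul_assoc, sq, tp, su, tu, hb', k1, k2, k3]
  · simp only [mul_assoc, sq, tp, su, tu, hb', k1, k2, k3]
  · simp only [mul_assoc, sq, tp, su, tu, hb', k1, k2, k3]

/-- the transposition (k, k+1), 0-based -/
def tr {n : ℕ} (k : Fin (n - 1)) : Equiv.Perm (Fin n) :=
  Equiv.swap ⟨k.val, by have := k.isLt; omega⟩ ⟨k.val + 1, by have := k.isLt; omega⟩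

def lk {n : ℕ} (k : Fin (n - 1)) : GG n :=
  gl ⟨k.val, by have := k.isLt; omega⟩ ⟨k.val + 1, by have := k.isLt; omega⟩

def genMap (n : ℕ) : UVBGen n → GG n
  | Sum.inl k => (lk k)⁻¹ * gr (tr k)
  | Sum.inr k => gr (tr k)

theorem tr_sq {n : ℕ} (k : Fin (n - 1)) : gr (tr k) * gr (tr k) = 1 := by
  rw [gr_mul, tr, Equiv.swap_mul_self]
  exact map_one _

theorem gr_tr_inv {n : ℕ} (k : Fin (n - 1)) : (gr (tr k))⁻¹ = gr (tr k) :=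
  inv_eq_of_mul_eq_one_left (tr_sq k)

theorem tr_far {n : ℕ} {i j : Fin (n - 1)} (h : (i : ℕ) + 2 ≤ j ∨ (j : ℕ) + 2 ≤ i) :
    Commute (gr (tr i)) (gr (tr j)) ∧ Commute (gr (tr i)) (lk j) ∧ Commute (lk i) (lk j) := by
  have hi := i.isLt
  have hj := j.isLt
  have f1 : ∀ a : Fin n, (a : ℕ) ≠ i → (a : ℕ) ≠ i + 1 → tr i a = a := fun a h1 h2 =>
    Equiv.swap_apply_of_ne_of_ne (fun e => h1 (by rw [e])) (fun e => h2 (by rw [e]))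
  have f2 : ∀ a : Fin n, (a : ℕ) ≠ j → (a : ℕ) ≠ j + 1 → tr j a = a := fun a h1 h2 =>
    Equiv.swap_apply_of_ne_of_ne (fun e => h1 (by rw [e])) (fun e => h2 (by rw [e]))
  refine ⟨?_, ?_, ?_⟩
  · have : Commute (tr i) (tr j) := by
      refine Equiv.Perm.Disjoint.commute fun a => ?_
      by_cases c : (a : ℕ) ≠ i ∧ (a : ℕ) ≠ i + 1
      · exact Or.inl (f1 a c.1 c.2)
      · exact Or.inr (f2 a (by omega) (by omega))
    exact this.map SemidirectProduct.inr
  · exact gr_gl_comm _ (f1 _ (by simp only; omega) (by simp only; omega))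
      (f1 _ (by simp only; omega) (by simp only; omega))
  · refine gl_comm ?_ ?_ <;> simp only [Fin.mk.injEq] <;> omega

theorem swap_braid {α : Type*} [DecidableEq α] {a b c : α} (hab : a ≠ b) (hac : a ≠ c)
    (hbc : b ≠ c) : Equiv.swap a b * Equiv.swap b c * Equiv.swap a b
      = Equiv.swap b c * Equiv.swap a b * Equiv.swap b c := by
  rw [Equiv.swap_mul_swap_mul_swap hab hac, Equiv.swap_comm a b, Equiv.swap_comm b c,
    Equiv.swap_mul_swap_mul_swap hbc.symm hac.symm, Equiv.swap_comm]

theorem tr_near {n : ℕ} {i j : Fin (n - 1)} (h : (j : ℕ) = i + 1) :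
    gr (tr i) * gr (tr j) * gr (tr i) = gr (tr j) * gr (tr i) * gr (tr j) ∧
    ∃ u : GG n, gr (tr i) * lk j * gr (tr i) = u ∧ gr (tr j) * lk i * gr (tr j) = u ∧
      Commute (lk i) u ∧ Commute u (lk j) ∧ Commute (lk i) (lk j) := by
  have hj := j.isLt
  obtain ⟨j, hj'⟩ := j
  obtain ⟨i, hi'⟩ := i
  simp only at h hj
  subst h
  have hab : (⟨i, by omega⟩ : Fin n) ≠ ⟨i + 1, by omega⟩ := by simp
  have hac : (⟨i, by omega⟩ : Fin n) ≠ ⟨i + 1 + 1, by omega⟩ := by simp [add_assoc]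
  have hbc : (⟨i + 1, by omega⟩ : Fin n) ≠ ⟨i + 1 + 1, by omega⟩ := by simp
  constructor
  · simp only [gr_mul, tr]
    congr 1
    exact swap_braid hab hac hbc
  · refine ⟨gl ⟨i, by omega⟩ ⟨i + 1 + 1, by omega⟩, ?_, ?_, ?_, ?_, ?_⟩
    · nth_rw 2 [← gr_tr_inv]
      rw [lk, gr_conj, tr, Equiv.swap_apply_right,
        Equiv.swap_apply_of_ne_of_ne hac.symm hbc.symm]
    · nth_rw 2 [← gr_tr_inv]
      rw [lk, gr_conj, tr, Equiv.swap_apply_left, Equiv.swap_apply_of_ne_of_ne hab hac]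
    all_goals
      refine gl_comm ?_ ?_ <;> simp only [Fin.mk.injEq] <;> omega

def Phi (n : ℕ) : UVB n →* GG n :=
  PresentedGroup.toGroup (f := genMap n) (by
    have hs : ∀ i, FreeGroup.lift (genMap n) (UVBGen.sg i) = (lk i)⁻¹ * gr (tr i) := fun i =>
      FreeGroup.lift_apply_of
    have hr : ∀ i, FreeGroup.lift (genMap n) (UVBGen.rg i) = gr (tr i) := fun i =>
      FreeGroup.lift_apply_of
    intro r hr'
    rcases hr' with ⟨i, j, hij, hc⟩ | ⟨i, j, hij, hc⟩ | ⟨i, hc⟩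
    · obtain ⟨b, u, h1, h2, c1, c2, c3⟩ := tr_near hij
      obtain ⟨r1, r3, r4, r5⟩ := rels_of_comm (tr_sq i) (tr_sq j) b h1 h2 c1 c2 c3
      rcases hc with h | h | h | h | h <;> subst h <;> rw [map_mul, map_inv, mul_inv_eq_one] <;>
        simp only [map_mul, hs, hr] <;> assumption
    · obtain ⟨a1, a2, a3⟩ := tr_far hij
      obtain ⟨b1, b2, b3⟩ := tr_far hij.symm
      rcases hc with h | h | h <;> subst h <;> rw [map_mul, map_inv, mul_inv_eq_one] <;>
        simp only [map_mul, hs, hr]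
      · exact ((a3.inv_inv.mul_right b2.symm.inv_left).mul_left (a2.inv_right.mul_right a1)).eq
      · exact a1.eq
      · exact (b2.symm.inv_left.mul_left a1).eq
    · subst hc
      rw [map_mul, hr, tr_sq])

theorem Phi_rho {n k : ℕ} (h : 1 ≤ k ∧ k ≤ n - 1) :
    Phi n (UVB.rho n k) = gr (tr ⟨k - 1, by omega⟩) := by
  rw [UVB.rho, dif_pos h]
  exact PresentedGroup.toGroup.of _

theorem Phi_sigma {n k : ℕ} (h : 1 ≤ k ∧ k ≤ n - 1) :
    Phi n (UVB.sigma n k) = (lk ⟨k - 1, by omega⟩)⁻¹ * gr (tr ⟨k - 1, by omega⟩) := by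
  rw [UVB.sigma, dif_pos h]
  exact PresentedGroup.toGroup.of _

theorem Phi_Lam_perm {n : ℕ} (π : Equiv.Perm (Fin n)) : ∀ i j : Fin n, i ≠ j →
    Phi n (Lam i j) = gl i j → Phi n (Lam (π i) (π j)) = gl (π i) (π j) := by
  rcases n with _ | m
  · exact fun i => i.elim0
  have hπ : π ∈ Submonoid.closure (Set.range fun i : Fin m ↦ Equiv.swap i.castSucc i.succ) := by
    rw [Equiv.Perm.mclosure_swap_castSucc_succ]; trivial
  induction hπ using Submonoid.closure_induction with
  | mem x hx =>
    obtain ⟨k, rfl⟩ := hx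
    intro i j hij h
    have hk := k.isLt
    have e : Lam (Equiv.swap k.castSucc k.succ i) (Equiv.swap k.castSucc k.succ j) = _ :=
      (Lam_conj_rho (k := k.val + 1) (by omega) (by omega) (by omega) (by omega) hij).symm
    have f : (Phi (m + 1)) (UVB.rho (m + 1) (k.val + 1)) = gr (Equiv.swap k.castSucc k.succ) :=
      Phi_rho (by omega)
    change Phi (m + 1) (Lam (Equiv.swap k.castSucc k.succ i) (Equiv.swap k.castSucc k.succ j))
      = gl (Equiv.swap k.castSucc k.succ i) (Equiv.swap k.castSucc k.succ j)
    rw [e, map_mul, map_mul, map_inv, f, h, gr_conj]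
  | one => exact fun i j _ h => h
  | mul x y _ _ hx hy =>
    intro i j hij h
    exact hx _ _ (fun e => hij (y.injective e)) (hy i j hij h)

theorem Phi_Lam {n : ℕ} {i j : Fin n} (h : i ≠ j) : Phi n (Lam i j) = gl i j := by
  have hn : 2 ≤ n := by
    have := i.isLt
    have := j.isLt
    have : (i : ℕ) ≠ j := fun e => h (Fin.ext e)
    omega
  obtain ⟨π, hπ⟩ := exists_perm ![(⟨0, by omega⟩ : Fin n), ⟨1, by omega⟩] ![i, j]
    (by intro a b; fin_cases a <;> fin_cases b <;> simp)
    (by intro a b; fin_cases a <;> fin_cases b <;> simp_all [eq_comm])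
  have h0 := hπ 0
  have h1 := hπ 1
  simp at h0 h1
  have e1 : Lam (⟨0, by omega⟩ : Fin n) ⟨1, by omega⟩ = UVB.rho n 1 * (UVB.sigma n 1)⁻¹ :=
    lam_a n 1 0
  rw [← h0, ← h1]
  apply Phi_Lam_perm
  · simp
  · rw [e1, map_mul, map_inv, Phi_rho (by omega), Phi_sigma (by omega), mul_inv_rev, inv_inv,
      mul_inv_cancel_left]
    rfl

/-! ### Assembly -/

/-- the product of free groups inside `NN n` -/
def emb (n : ℕ) : (PairIdx n → FreeGroup Bool) →* NN n where
  toFun f := fun p => if h : p.1 < p.2 then f ⟨p, h⟩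
    else if h : p.2 < p.1 then FreeGroup.map Bool.not (f ⟨(p.2, p.1), h⟩) else 1
  map_one' := by
    funext p
    simp only [Pi.one_apply, map_one]
    split_ifs <;> rfl
  map_mul' f g := by
    funext p
    simp only [Pi.mul_apply, map_mul]
    split_ifs <;> simp

theorem emb_injective (n : ℕ) : Function.Injective (emb n) := by
  intro f g h
  funext ⟨p, hp⟩
  have := congrFun h p
  simpa [emb, hp] using this

theorem emb_true {n : ℕ} (p : PairIdx n) :
    emb n (Pi.mulSingle p (FreeGroup.of true)) = ML p.1.1 p.1.2 := by
  obtain ⟨⟨i, j⟩, hij⟩ := p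
  funext ⟨a, b⟩
  simp only [emb, MonoidHom.coe_mk, OneHom.coe_mk, ML, Prod.mk.injEq, Pi.mulSingle_apply,
    Subtype.mk.injEq]
  simp only at hij
  rcases lt_trichotomy a b with h | h | h
  · have : ¬ (a = j ∧ b = i) := by rintro ⟨rfl, rfl⟩; exact absurd hij h.asymm
    simp [h, this]
  · subst h
    have h1 : ¬ (a = i ∧ a = j) := by rintro ⟨rfl, rfl⟩; exact lt_irrefl _ hij
    have h2 : ¬ (a = j ∧ a = i) := by rintro ⟨rfl, rfl⟩; exact lt_irrefl _ hij
    simp [h1, h2]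
  · have : ¬ (a = i ∧ b = j) := by rintro ⟨rfl, rfl⟩; exact absurd hij h.asymm
    simp only [h, h.asymm, this, dif_pos, if_false, dite_false]
    by_cases c : a = j ∧ b = i
    · simp [c]
    · have : ¬ (b = i ∧ a = j) := fun e => c e.symm
      simp [c, this]

theorem emb_false {n : ℕ} (p : PairIdx n) :
    emb n (Pi.mulSingle p (FreeGroup.of false)) = ML p.1.2 p.1.1 := by
  obtain ⟨⟨i, j⟩, hij⟩ := p
  funext ⟨a, b⟩
  simp only [emb, MonoidHom.coe_mk, OneHom.coe_mk, ML, Prod.mk.injEq, Pi.mulSingle_apply,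
    Subtype.mk.injEq]
  simp only at hij
  rcases lt_trichotomy a b with h | h | h
  · have : ¬ (a = j ∧ b = i) := by rintro ⟨rfl, rfl⟩; exact absurd hij h.asymm
    simp [h, this]
  · subst h
    have h1 : ¬ (a = i ∧ a = j) := by rintro ⟨rfl, rfl⟩; exact lt_irrefl _ hij
    have h2 : ¬ (a = j ∧ a = i) := by rintro ⟨rfl, rfl⟩; exact lt_irrefl _ hij
    simp [h1, h2]
  · have : ¬ (a = i ∧ b = j) := by rintro ⟨rfl, rfl⟩; exact absurd hij h.asymm
    simp only [h, h.asymm, this, dif_pos, if_false, dite_false]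
    by_cases c : a = j ∧ b = i
    · simp [c]
    · have : ¬ (b = i ∧ a = j) := fun e => c e.symm
      simp [c, this]

/-- The canonical map from the free group of rank two for each pair. -/
def psi (n : ℕ) (p : PairIdx n) : FreeGroup Bool →* UVB n :=
  FreeGroup.lift (fun b : Bool =>
          if b then UVB.lam n (p.1.1.val + 1) (p.1.2.val + 1)
          else UVB.lam n (p.1.2.val + 1) (p.1.1.val + 1))

theorem psi_range (n : ℕ) (p : PairIdx n) : (psi n p).range = pairSubgroup n p := by
  rw [psi, FreeGroup.range_lift_eq_closure, pairSubgroup]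
  congr 1
  ext x
  simp only [Set.mem_range, Bool.exists_bool, Set.mem_insert_iff, Set.mem_singleton_iff]
  simp only [Bool.false_eq_true, if_false, if_true]
  constructor
  · rintro (h | h)
    · exact Or.inr h.symm
    · exact Or.inl h.symm
  · rintro (h | h)
    · exact Or.inr h.symm
    · exact Or.inl h.symm

theorem Phi_psi (n : ℕ) (p : PairIdx n) (w : FreeGroup Bool) :
    Phi n (psi n p w) = SemidirectProduct.inl (emb n (Pi.mulSingle p w)) := by
  have : (Phi n).comp (psi n p) = (SemidirectProduct.inl.comp (emb n)).comp
      (MonoidHom.mulSingle (fun _ : PairIdx n => FreeGroup Bool) p) := by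
    ext1 b
    simp only [MonoidHom.comp_apply, MonoidHom.mulSingle_apply, psi, FreeGroup.lift_apply_of]
    cases b
    · rw [emb_false]
      exact Phi_Lam p.2.ne'
    · rw [emb_true]
      exact Phi_Lam p.2.ne
  exact congrArg (fun f : FreeGroup Bool →* GG n => f w) this

theorem psi_comm (n : ℕ) {p q : PairIdx n} (h : p ≠ q) :
    ∀ x ∈ pairSubgroup n p, ∀ y ∈ pairSubgroup n q, Commute x y := by
  obtain ⟨⟨i, j⟩, hij⟩ := p
  obtain ⟨⟨k, l⟩, hkl⟩ := q
  simp only at hij hkl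
  have n1 : ¬ (i = k ∧ j = l) := by rintro ⟨rfl, rfl⟩; exact h rfl
  have n2 : ¬ (i = l ∧ j = k) := by rintro ⟨rfl, rfl⟩; exact absurd hij hkl.asymm
  have c1 : Commute (Lam i j) (Lam k l) := Lam_comm hij.ne hkl.ne n1 n2
  have c2 : Commute (Lam i j) (Lam l k) := Lam_comm hij.ne hkl.ne' n2 n1
  have c3 : Commute (Lam j i) (Lam k l) := Lam_comm hij.ne' hkl.ne
    (fun e => n2 e.symm) (fun e => n1 e.symm)
  have c4 : Commute (Lam j i) (Lam l k) := Lam_comm hij.ne' hkl.ne'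
    (fun e => n1 e.symm) (fun e => n2 e.symm)
  have key : pairSubgroup n ⟨(i, j), hij⟩
      ≤ Subgroup.centralizer (pairSubgroup n ⟨(k, l), hkl⟩ : Set (UVB n)) := by
    unfold pairSubgroup
    rw [Subgroup.centralizer_closure, Subgroup.closure_le]
    rintro x hx
    refine Subgroup.mem_centralizer_iff.mpr fun y hy => ?_
    rcases hx with rfl | rfl <;> rcases hy with rfl | rfl
    · exact c1.symm.eq
    · exact c2.symm.eq
    · exact c3.symm.eq
    · exact c4.symm.eq
  intro x hx y hy
  exact (Subgroup.mem_centralizer_iff.mp (key hx) y hy).symm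

theorem psi_pairwise (n : ℕ) :
    Pairwise fun p q : PairIdx n => ∀ x y, Commute (psi n p x) (psi n q y) := by
  intro p q h x y
  exact psi_comm n h _ (psi_range n p ▸ ⟨x, rfl⟩) _ (psi_range n q ▸ ⟨y, rfl⟩)

/-- The combined map from the product of free groups. -/
def Psi (n : ℕ) : (PairIdx n → FreeGroup Bool) →* UVB n :=
  MonoidHom.noncommPiCoprod (psi n) (psi_pairwise n)

theorem Psi_single (n : ℕ) (p : PairIdx n) (w : FreeGroup Bool) :
    Psi n (Pi.mulSingle p w) = psi n p w :=
  MonoidHom.noncommPiCoprod_mulSingle _ _ _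

theorem Psi_injective (n : ℕ) : Function.Injective (Psi n) := by
  have : (Phi n).comp (Psi n) = SemidirectProduct.inl.comp (emb n) := by
    refine MonoidHom.pi_ext fun p w => ?_
    rw [MonoidHom.comp_apply, MonoidHom.comp_apply, Psi_single, Phi_psi]
  have inj : Function.Injective ((Phi n).comp (Psi n)) := by
    rw [this]
    exact SemidirectProduct.inl_injective.comp (emb_injective n)
  exact Function.Injective.of_comp (f := Phi n) inj

theorem Psi_range {n : ℕ} (ι : UVB n →* Equiv.Perm (Fin n)) (hι : IsIota n ι) :
    (Psi n).range = ι.ker := by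
  rw [Psi, MonoidHom.noncommPiCoprod_range, ← H_eq_ker ι hι, H_eq_iSup]
  simp only [psi_range]

theorem coprod_injective (n : ℕ) (hcomm : Pairwise fun p q : PairIdx n =>
        ∀ x y : UVB n, x ∈ pairSubgroup n p → y ∈ pairSubgroup n q → Commute x y) :
    Function.Injective (Subgroup.noncommPiCoprod hcomm) := by
  let e : ∀ p : PairIdx n, FreeGroup Bool →* pairSubgroup n p := fun p =>
    (psi n p).codRestrict (pairSubgroup n p) (fun x => psi_range n p ▸ ⟨x, rfl⟩)
  let E : (PairIdx n → FreeGroup Bool) →* (∀ p : PairIdx n, pairSubgroup n p) :=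
    { toFun := fun f p => e p (f p)
      map_one' := by funext p; simp
      map_mul' := fun f g => by funext p; simp }
  have hE : (Subgroup.noncommPiCoprod hcomm).comp E = Psi n := by
    refine MonoidHom.pi_ext fun p w => ?_
    have : E (Pi.mulSingle p w) = Pi.mulSingle p (e p w) := by
      funext q
      change e q _ = _
      by_cases h : q = p
      · subst h; simp
      · simp [h]
    rw [MonoidHom.comp_apply, this, Subgroup.noncommPiCoprod_mulSingle, Psi_single]
    rfl
  have hsurj : Function.Surjective E := by
    intro x
    have : ∀ p, ∃ w, e p w = x p := fun p => by
      obtain ⟨w, hw⟩ : (x p : UVB n) ∈ (psi n p).range := by rw [psi_range]; exact (x p).2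
      exact ⟨w, Subtype.ext hw⟩
    choose f hf using this
    exact ⟨f, funext hf⟩
  intro x y hxy
  obtain ⟨f, rfl⟩ := hsurj x
  obtain ⟨g, rfl⟩ := hsurj y
  have : Psi n f = Psi n g := by rw [← hE]; exact hxy
  rw [Psi_injective n this]

end UVBProof

/-- For `n ≥ 2`: each subgroup `⟨λ_{i,j}, λ_{j,i}⟩` is free of rank 2,
freely generated by λ_{i,j} and λ_{j,i}; the n(n−1)/2 subgroups pairwise commute
elementwise; `UVP n` is their internal direct product (the canonical homomorphism from
the direct product of the family is injective with range `UVP n`); and consequently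
`UVP n` is isomorphic to a direct product of n(n−1)/2 free groups of rank 2. -/
theorem statement1 (n : ℕ) (hn : 2 ≤ n)
    (ι : UVB n →* Equiv.Perm (Fin n)) (hι : IsIota n ι) :
    (∀ p : PairIdx n,
        Function.Injective (FreeGroup.lift (fun b : Bool =>
          if b then UVB.lam n (p.1.1.val + 1) (p.1.2.val + 1)
          else UVB.lam n (p.1.2.val + 1) (p.1.1.val + 1)) : FreeGroup Bool →* UVB n) ∧
        (FreeGroup.lift (fun b : Bool =>
          if b then UVB.lam n (p.1.1.val + 1) (p.1.2.val + 1)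
          else UVB.lam n (p.1.2.val + 1) (p.1.1.val + 1))).range = pairSubgroup n p) ∧
    (∀ p q : PairIdx n, p ≠ q →
        ∀ x ∈ pairSubgroup n p, ∀ y ∈ pairSubgroup n q, Commute x y) ∧
    (∀ hcomm : Pairwise fun p q : PairIdx n =>
        ∀ x y : UVB n, x ∈ pairSubgroup n p → y ∈ pairSubgroup n q → Commute x y,
      Function.Injective (Subgroup.noncommPiCoprod hcomm) ∧
      (Subgroup.noncommPiCoprod hcomm).range = ι.ker) ∧
    Nonempty ((↥ι.ker) ≃* ((p : PairIdx n) → FreeGroup Bool)) := by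

  have hinj : ∀ p : PairIdx n, Function.Injective (UVBProof.psi n p) := by
    intro p x y h
    rw [← UVBProof.Psi_single, ← UVBProof.Psi_single] at h
    exact Pi.mulSingle_injective p (UVBProof.Psi_injective n h)
  refine ⟨fun p => ⟨hinj p, UVBProof.psi_range n p⟩,
    fun p q h => UVBProof.psi_comm n h, fun hcomm => ⟨UVBProof.coprod_injective n hcomm, ?_⟩, ?_⟩
  · rw [Subgroup.noncommPiCoprod_range, ← UVBProof.H_eq_iSup, UVBProof.H_eq_ker ι hι]
  · rw [← UVBProof.Psi_range ι hι]
    exact ⟨(MonoidHom.ofInjective (UVBProof.Psi_injective n)).symm⟩
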